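/- Let (K,|·|) be a normed field, f ∈ K[z] a polynomial of degree n ≥ 2 which splits over K, ξ ∈ Kⁿ a root-vector of f, and 1 ≤ p ≤ ∞ with conjugate exponent q. Suppose the initial guess x⁰ ∈ Kⁿ has pairwise distinct components and satisfies h(E(x⁰)) ≤ 2, where E(x) = ‖(x − ξ)/d(x)‖_p and h(t) = (1 + 2^{1/q} t)(1 + t/(n−1)^{1/p})^{n−1}. Then f has only simple zeros in K and the Weierstrass iteration x^{k+1} = x^k − W(x^k) is well defined and converges to ξ, with, for all k ≥ 0 and each index i: |x^{k+1}_i − ξ_i| ≤ θ λ^{2^k} |x^k_i − ξ_i| and |x^k_i − ξ_i| ≤ θ^k λ^{2^k − 1} |x⁰_i − ξ_i|, where λ = β(E(x⁰))/ψ(E(x⁰)), θ = ψ(E(x⁰)), β(t) = (1 + t/(n−1)^{1/p})^{n−1} − 1 and ψ(t) = 1 − 2^{1/q} t (1 + t/(n−1)^{1/p})^{n−1}. -/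

import Mathlib

open Finset Filter Topology
open scoped ENNReal

noncomputable def pnorm {n : ℕ} (p : ℝ≥0∞) (v : Fin n → ℝ) : ℝ :=
  if p = ⊤ then ⨆ i, |v i| else (∑ i, |v i| ^ p.toReal) ^ (1 / p.toReal)

noncomputable def epow (a : ℝ) (p : ℝ≥0∞) : ℝ :=
  if p = ⊤ then 1 else a ^ (1 / p.toReal)

noncomputable def dsep {K : Type*} [NormedField K] {n : ℕ} (x : Fin n → K) (i : Fin n) : ℝ :=
  sInf {r : ℝ | ∃ j, j ≠ i ∧ r = ‖x i - x j‖}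

noncomputable def Wcorr {K : Type*} [NormedField K] {n : ℕ} (f : Polynomial K)
    (x : Fin n → K) (i : Fin n) : K :=
  Polynomial.eval (x i) f / (f.leadingCoeff * ∏ j ∈ Finset.univ.erase i, (x i - x j))

def IsRootVector {K : Type*} [NormedField K] {n : ℕ} (f : Polynomial K) (ξ : Fin n → K) : Prop :=
  ∀ z : K, Polynomial.eval z f = f.leadingCoeff * ∏ i, (z - ξ i)

/-!
Dividing `f(x_i)` by its denominator gives `W_i(x) = (x_i - ξ_i) ∏_{j ≠ i} (1 + u_ij)` with
`u_ij = (x_j - ξ_j) / (x_i - x_j)`, where `|u_ij|` is at most the `j`-th component of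
`(x - ξ) / d(x)`. By Hölder and AM-GM the product is bounded by
`M(E(x)) = (1 + E(x) / (n - 1)^{1/p})^{n-1}`. One step therefore multiplies the `i`-th error by at
most `β(E(x)) = M(E(x)) - 1`, and, by Hölder on two components, shrinks the distances between
components at most by the factor `ψ(E(x))`; hence `E(x') ≤ β(E(x)) / ψ(E(x)) * E(x)`.
The assumption `h(E(x)) ≤ 2` says that `β(E(x)) ≤ ψ(E(x))`, so it is inherited by `x'`. Since `β` is
convex with `β(0) = 0`, shrinking `E` by a factor `c` shrinks the contraction factor by `c` too:
this feedback makes the convergence quadratic.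
-/

section Scalar

lemma one_add_mul_pow_sub_one_le {c s : ℝ} (hc0 : 0 ≤ c) (hc1 : c ≤ 1) (hs : 0 ≤ s) (m : ℕ) :
    (1 + c * s) ^ m - 1 ≤ c * ((1 + s) ^ m - 1) := by
  have hconv := (convexOn_pow (𝕜 := ℝ) m).2 (Set.mem_Ici.mpr zero_le_one)
    (Set.mem_Ici.mpr (by linarith : 0 ≤ 1 + s)) (sub_nonneg.mpr hc1) hc0 (sub_add_cancel 1 c)
  simp only [smul_eq_mul, one_pow] at hconv
  rw [show (1 - c) * 1 + c * (1 + s) = 1 + c * s by ring] at hconv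
  linarith

lemma prod_le_pow_card_of_sum_le_card_mul {ι : Type*} {s : Finset ι} {z : ι → ℝ} {c : ℝ}
    (hz : ∀ i ∈ s, 0 ≤ z i) (hc : ∑ i ∈ s, z i ≤ #s * c) : ∏ i ∈ s, z i ≤ c ^ #s := by
  rcases s.eq_empty_or_nonempty with rfl | hs
  · simp
  have hcard : (0 : ℝ) < #s := by exact_mod_cast hs.card_pos
  have hprod : 0 ≤ ∏ i ∈ s, z i := prod_nonneg hz
  have hmean : (∏ i ∈ s, z i) ^ (#s : ℝ)⁻¹ ≤ c := by
    have hamgm := Real.geom_mean_le_arith_mean s (fun _ => 1) z (fun _ _ => zero_le_one)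
      (by simpa using hcard) hz
    simp only [Real.rpow_one, sum_const, nsmul_eq_mul, mul_one, one_mul] at hamgm
    exact hamgm.trans ((div_le_iff₀' hcard).mpr hc)
  calc ∏ i ∈ s, z i = ((∏ i ∈ s, z i) ^ (#s : ℝ)⁻¹) ^ #s :=
        (Real.rpow_inv_natCast_pow hprod hs.card_ne_zero).symm
    _ ≤ c ^ #s := pow_le_pow_left₀ (Real.rpow_nonneg hprod _) hmean _

lemma norm_prod_one_add_sub_one_le_prod {R ι : Type*} [NormedCommRing R] [NormOneClass R]
    (s : Finset ι) (u : ι → R) : ‖∏ i ∈ s, (1 + u i) - 1‖ ≤ ∏ i ∈ s, (1 + ‖u i‖) - 1 := by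
  classical
  induction s using Finset.induction_on with
  | empty => simp
  | insert a s ha ih =>
    rw [prod_insert ha, prod_insert ha]
    have hprod : ‖∏ i ∈ s, (1 + u i)‖ ≤ ∏ i ∈ s, (1 + ‖u i‖) := by
      linarith [norm_le_norm_sub_add (∏ i ∈ s, (1 + u i)) 1, norm_one (α := R)]
    calc ‖(1 + u a) * ∏ i ∈ s, (1 + u i) - 1‖
        = ‖(∏ i ∈ s, (1 + u i) - 1) + u a * ∏ i ∈ s, (1 + u i)‖ := by congr 1; ring
      _ ≤ (∏ i ∈ s, (1 + ‖u i‖) - 1) + ‖u a‖ * ∏ i ∈ s, (1 + ‖u i‖) :=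
        norm_add_le_of_le ih ((norm_mul_le _ _).trans (by gcongr))
      _ = (1 + ‖u a‖) * ∏ i ∈ s, (1 + ‖u i‖) - 1 := by ring

lemma two_pow_sub_one_add (k : ℕ) : 2 ^ k + (2 ^ k - 1) = 2 ^ (k + 1) - 1 := by
  have := Nat.one_le_two_pow (n := k)
  rw [pow_succ]
  lia

lemma le_pow_two_pow_sub_one_mul {e : ℕ → ℝ} {r : ℝ} (hr0 : 0 ≤ r) (hr1 : r ≤ 1)
    (hstep : ∀ k c, 0 ≤ c → c ≤ 1 → e k ≤ c * e 0 → e (k + 1) ≤ c * r * e k) (k : ℕ) :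
    e k ≤ r ^ (2 ^ k - 1) * e 0 := by
  induction k with
  | zero => simp
  | succ k ih =>
    have hc0 : 0 ≤ r ^ (2 ^ k - 1) := pow_nonneg hr0 _
    calc e (k + 1) ≤ r ^ (2 ^ k - 1) * r * e k := hstep k _ hc0 (pow_le_one₀ hr0 hr1) ih
      _ = r ^ 2 ^ k * e k := by rw [← pow_succ, Nat.sub_add_cancel Nat.one_le_two_pow]
      _ ≤ r ^ 2 ^ k * (r ^ (2 ^ k - 1) * e 0) := by gcongr
      _ = r ^ (2 ^ (k + 1) - 1) * e 0 := by rw [← mul_assoc, ← pow_add, two_pow_sub_one_add]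

lemma le_pow_mul_pow_two_pow_sub_one_mul {a : ℕ → ℝ} {θ r : ℝ} (hθ : 0 ≤ θ) (hr : 0 ≤ r)
    (hstep : ∀ k, a (k + 1) ≤ θ * r ^ 2 ^ k * a k) (k : ℕ) :
    a k ≤ θ ^ k * r ^ (2 ^ k - 1) * a 0 := by
  induction k with
  | zero => simp
  | succ k ih =>
    calc a (k + 1) ≤ θ * r ^ 2 ^ k * a k := hstep k
      _ ≤ θ * r ^ 2 ^ k * (θ ^ k * r ^ (2 ^ k - 1) * a 0) := by gcongr
      _ = θ ^ (k + 1) * r ^ (2 ^ k + (2 ^ k - 1)) * a 0 := by ring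
      _ = θ ^ (k + 1) * r ^ (2 ^ (k + 1) - 1) * a 0 := by rw [two_pow_sub_one_add]

end Scalar

section Norms

variable {n : ℕ} {p q : ℝ≥0∞}

lemma epow_eq_rpow_inv (a : ℝ) (p : ℝ≥0∞) : epow a p = a ^ p.toReal⁻¹ := by
  unfold epow
  split_ifs with hp
  · simp [hp]
  · rw [one_div]

lemma epow_nonneg {a : ℝ} (ha : 0 ≤ a) (p : ℝ≥0∞) : 0 ≤ epow a p :=
  epow_eq_rpow_inv a p ▸ Real.rpow_nonneg ha _

lemma epow_pos {a : ℝ} (ha : 0 < a) (p : ℝ≥0∞) : 0 < epow a p :=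
  epow_eq_rpow_inv a p ▸ Real.rpow_pos_of_pos ha _

lemma toReal_inv_eq_one_sub (p q : ℝ≥0∞) [p.HolderConjugate q] :
    q.toReal⁻¹ = 1 - p.toReal⁻¹ := by
  have hp : p⁻¹ ≤ 1 := ENNReal.inv_le_one.mpr (ENNReal.HolderConjugate.one_le p q)
  rw [← ENNReal.toReal_inv, ← ENNReal.HolderConjugate.one_sub_inv p q,
    ENNReal.toReal_sub_of_le hp ENNReal.one_ne_top, ENNReal.toReal_one, ENNReal.toReal_inv]

lemma epow_eq_div_epow {a : ℝ} (ha : 0 < a) (p q : ℝ≥0∞) [p.HolderConjugate q] :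
    epow a q = a / epow a p := by
  rw [epow_eq_rpow_inv, epow_eq_rpow_inv, toReal_inv_eq_one_sub p q, Real.rpow_sub ha,
    Real.rpow_one]

lemma pnorm_nonneg (p : ℝ≥0∞) (v : Fin n → ℝ) : 0 ≤ pnorm p v := by
  unfold pnorm
  split_ifs
  · exact Real.iSup_nonneg fun i => abs_nonneg _
  · positivity

lemma pnorm_le_pnorm {v w : Fin n → ℝ} (h : ∀ i, |v i| ≤ |w i|) : pnorm p v ≤ pnorm p w := by
  unfold pnorm
  split_ifs
  · exact ciSup_mono (Set.finite_range _).bddAbove h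
  · exact Real.rpow_le_rpow (by positivity) (sum_le_sum fun i _ =>
      Real.rpow_le_rpow (abs_nonneg _) (h i) ENNReal.toReal_nonneg) (by positivity)

lemma pnorm_const_mul (hp : p ≠ 0) (c : ℝ) (v : Fin n → ℝ) :
    pnorm p (fun i => c * v i) = |c| * pnorm p v := by
  unfold pnorm
  split_ifs with hpt
  · simp only [abs_mul, Real.mul_iSup_of_nonneg (abs_nonneg c)]
  · have hp0 : p.toReal ≠ 0 := ENNReal.toReal_ne_zero.mpr ⟨hp, hpt⟩
    simp only [abs_mul, Real.mul_rpow (abs_nonneg _) (abs_nonneg _), ← mul_sum]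
    rw [Real.mul_rpow (by positivity) (by positivity), one_div,
      Real.rpow_rpow_inv (abs_nonneg c) hp0]

lemma sum_abs_le_epow_card_mul_pnorm (p q : ℝ≥0∞) [p.HolderConjugate q] (s : Finset (Fin n))
    (v : Fin n → ℝ) : ∑ i ∈ s, |v i| ≤ epow #s q * pnorm p v := by
  rcases s.eq_empty_or_nonempty with rfl | hs
  · simpa using mul_nonneg (epow_nonneg le_rfl q) (pnorm_nonneg p v)
  have hcard : (0 : ℝ) < #s := by exact_mod_cast hs.card_pos
  rw [epow_eq_rpow_inv, toReal_inv_eq_one_sub p q, pnorm]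
  split_ifs with hpt
  · subst hpt
    simp only [ENNReal.toReal_top, inv_zero, sub_zero, Real.rpow_one, ← nsmul_eq_mul]
    exact sum_le_card_nsmul _ _ _ fun i _ => le_ciSup (Set.finite_range fun i => |v i|).bddAbove i
  have hp1 : 1 ≤ p.toReal := by
    simpa using ENNReal.toReal_mono hpt (ENNReal.HolderConjugate.one_le p q)
  have hp0 : 0 < p.toReal := one_pos.trans_le hp1
  rw [← Real.rpow_le_rpow_iff (by positivity) (by positivity) hp0,
    Real.mul_rpow (by positivity) (by positivity), ← Real.rpow_mul hcard.le, one_div,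
    Real.rpow_inv_rpow (by positivity) hp0.ne', sub_mul, one_mul, inv_mul_cancel₀ hp0.ne']
  calc (∑ i ∈ s, |v i|) ^ p.toReal
      ≤ (#s : ℝ) ^ (p.toReal - 1) * ∑ i ∈ s, |v i| ^ p.toReal :=
        Real.rpow_sum_le_const_mul_sum_rpow s v hp1
    _ ≤ (#s : ℝ) ^ (p.toReal - 1) * ∑ i, |v i| ^ p.toReal := by
        gcongr
        exact subset_univ s

end Norms

section ControlFunctions

/-- The function `M(t) = (1 + t / m^{1/p})^m`. For `m = n - 1` it is the common ingredient
`(1 + t / (n - 1)^{1/p})^{n - 1}` of the functions `h`, `β` and `ψ` of the theorem; indexing by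
`m` avoids the real subtraction `n - 1`. -/
noncomputable def weierstrassMajorant (m : ℕ) (p : ℝ≥0∞) (t : ℝ) : ℝ :=
  (1 + t / epow m p) ^ m

/-- The function `β` of the theorem with `m = n - 1`: it bounds the factor by which one Weierstrass
step multiplies each error. -/
noncomputable def weierstrassBeta (m : ℕ) (p : ℝ≥0∞) (t : ℝ) : ℝ :=
  weierstrassMajorant m p t - 1

/-- The function `ψ` of the theorem with `m = n - 1`: it bounds from below the factor by which one
Weierstrass step multiplies the distance of two components. -/
noncomputable def weierstrassPsi (m : ℕ) (p q : ℝ≥0∞) (t : ℝ) : ℝ :=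
  1 - epow 2 q * t * weierstrassMajorant m p t

variable {m : ℕ} {p q : ℝ≥0∞} {c s t : ℝ}

lemma weierstrassMajorant_mono (hs : 0 ≤ s) (hst : s ≤ t) :
    weierstrassMajorant m p s ≤ weierstrassMajorant m p t := by
  have := epow_nonneg (Nat.cast_nonneg m) p
  unfold weierstrassMajorant
  gcongr

lemma one_le_weierstrassMajorant (ht : 0 ≤ t) : 1 ≤ weierstrassMajorant m p t :=
  one_le_pow₀ (le_add_of_nonneg_right (div_nonneg ht (epow_nonneg (Nat.cast_nonneg m) p)))

lemma weierstrassBeta_nonneg (ht : 0 ≤ t) : 0 ≤ weierstrassBeta m p t :=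
  sub_nonneg.mpr (one_le_weierstrassMajorant ht)

lemma weierstrassBeta_pos (hm : m ≠ 0) (ht : 0 < t) : 0 < weierstrassBeta m p t := by
  have : 0 < epow m p := epow_pos (by positivity) p
  exact sub_pos.mpr (one_lt_pow₀ (lt_add_of_pos_right 1 (by positivity)) hm)

lemma weierstrassBeta_le_mul (hc0 : 0 ≤ c) (hc1 : c ≤ 1) (hs : 0 ≤ s) (ht : 0 ≤ t)
    (hst : s ≤ c * t) : weierstrassBeta m p s ≤ c * weierstrassBeta m p t :=
  calc weierstrassBeta m p s ≤ weierstrassBeta m p (c * t) :=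
        sub_le_sub_right (weierstrassMajorant_mono hs hst) 1
    _ = (1 + c * (t / epow m p)) ^ m - 1 := by
        rw [weierstrassBeta, weierstrassMajorant, mul_div_assoc]
    _ ≤ c * weierstrassBeta m p t :=
        one_add_mul_pow_sub_one_le hc0 hc1 (div_nonneg ht (epow_nonneg (Nat.cast_nonneg m) p)) m

lemma weierstrassPsi_anti (hs : 0 ≤ s) (hst : s ≤ t) :
    weierstrassPsi m p q t ≤ weierstrassPsi m p q s := by
  have ht : 0 ≤ t := hs.trans hst
  have ha := epow_nonneg zero_le_two q
  have hM := zero_le_one.trans (one_le_weierstrassMajorant (m := m) (p := p) hs)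
  unfold weierstrassPsi
  gcongr
  exact weierstrassMajorant_mono hs hst

lemma weierstrassBeta_le_weierstrassPsi_iff :
    weierstrassBeta m p t ≤ weierstrassPsi m p q t ↔
      (1 + epow 2 q * t) * weierstrassMajorant m p t ≤ 2 := by
  unfold weierstrassBeta weierstrassPsi
  constructor <;> intro h <;> linarith

lemma weierstrassBeta_le_weierstrassPsi_mono (hs : 0 ≤ s) (hst : s ≤ t)
    (h : weierstrassBeta m p t ≤ weierstrassPsi m p q t) :
    weierstrassBeta m p s ≤ weierstrassPsi m p q s :=
  calc weierstrassBeta m p s ≤ weierstrassBeta m p t :=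
        sub_le_sub_right (weierstrassMajorant_mono hs hst) 1
    _ ≤ weierstrassPsi m p q t := h
    _ ≤ weierstrassPsi m p q s := weierstrassPsi_anti hs hst

lemma weierstrassPsi_pos (hm : m ≠ 0) (ht : 0 ≤ t)
    (h : weierstrassBeta m p t ≤ weierstrassPsi m p q t) : 0 < weierstrassPsi m p q t := by
  rcases ht.eq_or_lt with rfl | ht
  · simp [weierstrassPsi]
  · exact (weierstrassBeta_pos hm ht).trans_le h

lemma weierstrassBeta_lt_one (ht : 0 ≤ t)
    (h : weierstrassBeta m p t ≤ weierstrassPsi m p q t) : weierstrassBeta m p t < 1 := by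
  rcases ht.eq_or_lt with rfl | ht
  · simp [weierstrassBeta, weierstrassMajorant]
  · have ha : 0 < epow 2 q := epow_pos two_pos q
    have hM := one_pos.trans_le (one_le_weierstrassMajorant (m := m) (p := p) ht.le)
    exact h.trans_lt (sub_lt_self 1 (by positivity))

lemma prod_one_add_abs_le_weierstrassMajorant {n : ℕ} (hp : 1 ≤ p) (s : Finset (Fin n))
    (v : Fin n → ℝ) : ∏ i ∈ s, (1 + |v i|) ≤ weierstrassMajorant #s p (pnorm p v) := by
  rcases s.eq_empty_or_nonempty with rfl | hs
  · simp [weierstrassMajorant]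
  have := ENNReal.HolderConjugate.conjExponent hp
  have hcard : (0 : ℝ) < #s := by exact_mod_cast hs.card_pos
  refine prod_le_pow_card_of_sum_le_card_mul (fun i _ => by positivity) ?_
  calc ∑ i ∈ s, (1 + |v i|) = #s + ∑ i ∈ s, |v i| := by simp [sum_add_distrib]
    _ ≤ #s + epow #s p.conjExponent * pnorm p v := by
        gcongr
        exact sum_abs_le_epow_card_mul_pnorm p _ s v
    _ = #s * (1 + pnorm p v / epow #s p) := by
        rw [epow_eq_div_epow hcard p p.conjExponent]
        ring

end ControlFunctions

section Separation

variable {K : Type*} [NormedField K] {n : ℕ} {x : Fin n → K} {i j : Fin n}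

lemma dsep_le_norm_sub (x : Fin n → K) (hij : j ≠ i) : dsep x i ≤ ‖x i - x j‖ := by
  refine csInf_le ⟨0, ?_⟩ ⟨j, hij, rfl⟩
  rintro r ⟨k, -, rfl⟩
  exact norm_nonneg _

lemma exists_dsep_eq_norm_sub [Nontrivial (Fin n)] (x : Fin n → K) (i : Fin n) :
    ∃ j ≠ i, dsep x i = ‖x i - x j‖ := by
  refine Set.Nonempty.csInf_mem (s := {r : ℝ | ∃ j, j ≠ i ∧ r = ‖x i - x j‖}) ?_ ?_
  · obtain ⟨j, hj⟩ := exists_ne i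
    exact ⟨_, j, hj, rfl⟩
  · refine (Set.finite_range fun j => ‖x i - x j‖).subset ?_
    rintro r ⟨j, -, rfl⟩
    exact ⟨j, rfl⟩

lemma dsep_pos [Nontrivial (Fin n)] (hx : Function.Injective x) (i : Fin n) : 0 < dsep x i := by
  obtain ⟨j, hj, h⟩ := exists_dsep_eq_norm_sub x i
  exact h ▸ norm_sub_pos_iff.mpr (hx.ne hj.symm)

end Separation

section Step

/-- The function `E` of the theorem, `E(y) = ‖(y - ξ) / d(y)‖_p`, measuring the distance of `y` to
the root-vector `ξ` relative to the separation of the components of `y`. -/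
noncomputable def relError {K : Type*} [NormedField K] {n : ℕ} (p : ℝ≥0∞) (ξ y : Fin n → K) : ℝ :=
  pnorm p fun i => ‖y i - ξ i‖ / dsep y i

/-- The Weierstrass iteration map `y ↦ y - W(y)`. -/
noncomputable def weierstrassStep {K : Type*} [NormedField K] {n : ℕ} (f : Polynomial K)
    (y : Fin n → K) : Fin n → K :=
  fun i => y i - Wcorr f y i

variable {K : Type*} [NormedField K] {n : ℕ} {f : Polynomial K} {ξ y : Fin n → K} {p : ℝ≥0∞}

lemma relError_nonneg (p : ℝ≥0∞) (ξ y : Fin n → K) : 0 ≤ relError p ξ y := pnorm_nonneg _ _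

lemma Wcorr_eq_mul_prod_one_add (hf : f ≠ 0) (hroot : IsRootVector f ξ)
    (hy : Function.Injective y) (i : Fin n) :
    Wcorr f y i = (y i - ξ i) * ∏ j ∈ univ.erase i, (1 + (y j - ξ j) / (y i - y j)) := by
  rw [Wcorr, hroot (y i), ← mul_prod_erase univ _ (mem_univ i),
    mul_div_mul_left _ _ (Polynomial.leadingCoeff_ne_zero.mpr hf), mul_div_assoc,
    ← prod_div_distrib]
  congr 1
  refine prod_congr rfl fun j hj => ?_
  have hne : y i - y j ≠ 0 := sub_ne_zero.mpr (hy.ne (ne_of_mem_erase hj).symm)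
  rw [one_add_div hne]
  congr 1
  ring

variable [Nontrivial (Fin n)]

lemma prod_one_add_norm_le_weierstrassMajorant (hp : 1 ≤ p) (hy : Function.Injective y)
    (i : Fin n) :
    ∏ j ∈ univ.erase i, (1 + ‖(y j - ξ j) / (y i - y j)‖) ≤
      weierstrassMajorant (n - 1) p (relError p ξ y) := by
  have hcard : #(univ.erase i) = n - 1 := by simp
  rw [← hcard]
  refine le_trans ?_ (prod_one_add_abs_le_weierstrassMajorant hp _ _)
  gcongr with j hj
  have hsep : dsep y j ≤ ‖y i - y j‖ :=
    norm_sub_rev (y i) (y j) ▸ dsep_le_norm_sub y (ne_of_mem_erase hj).symm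
  rw [norm_div]
  exact (div_le_div_of_nonneg_left (norm_nonneg _) (dsep_pos hy j) hsep).trans (le_abs_self _)

lemma norm_Wcorr_le (hf : f ≠ 0) (hroot : IsRootVector f ξ) (hp : 1 ≤ p)
    (hy : Function.Injective y) (i : Fin n) :
    ‖Wcorr f y i‖ ≤ weierstrassMajorant (n - 1) p (relError p ξ y) * ‖y i - ξ i‖ := by
  rw [Wcorr_eq_mul_prod_one_add hf hroot hy, norm_mul, norm_prod, mul_comm]
  gcongr
  refine le_trans ?_ (prod_one_add_norm_le_weierstrassMajorant hp hy i)
  gcongr with j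
  exact norm_one (α := K) ▸ norm_add_le 1 _

lemma norm_weierstrassStep_sub_root_le (hf : f ≠ 0) (hroot : IsRootVector f ξ) (hp : 1 ≤ p)
    (hy : Function.Injective y) (i : Fin n) :
    ‖weierstrassStep f y i - ξ i‖ ≤ weierstrassBeta (n - 1) p (relError p ξ y) * ‖y i - ξ i‖ := by
  have hstep : weierstrassStep f y i - ξ i =
      -((∏ j ∈ univ.erase i, (1 + (y j - ξ j) / (y i - y j)) - 1) * (y i - ξ i)) := by
    rw [weierstrassStep, Wcorr_eq_mul_prod_one_add hf hroot hy]
    ring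
  rw [hstep, norm_neg, norm_mul]
  gcongr
  exact (norm_prod_one_add_sub_one_le_prod _ _).trans
    (sub_le_sub_right (prod_one_add_norm_le_weierstrassMajorant hp hy i) 1)

variable (p) (q : ℝ≥0∞) [p.HolderConjugate q]

lemma norm_sub_root_add_norm_sub_root_le (ξ : Fin n → K) (hy : Function.Injective y) {i j : Fin n}
    (hij : i ≠ j) :
    ‖y i - ξ i‖ + ‖y j - ξ j‖ ≤ epow 2 q * relError p ξ y * ‖y i - y j‖ := by
  set v : Fin n → ℝ := fun i => ‖y i - ξ i‖ / dsep y i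
  have hbound : ∀ k, dsep y k ≤ ‖y i - y j‖ → ‖y k - ξ k‖ ≤ |v k| * ‖y i - y j‖ := by
    intro k hk
    calc ‖y k - ξ k‖ = v k * dsep y k := (div_mul_cancel₀ _ (dsep_pos hy k).ne').symm
      _ ≤ |v k| * ‖y i - y j‖ := mul_le_mul (le_abs_self _) hk (dsep_pos hy k).le (abs_nonneg _)
  calc ‖y i - ξ i‖ + ‖y j - ξ j‖
      ≤ |v i| * ‖y i - y j‖ + |v j| * ‖y i - y j‖ := by
        gcongr
        · exact hbound i (dsep_le_norm_sub y hij.symm)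
        · exact hbound j (norm_sub_rev (y i) (y j) ▸ dsep_le_norm_sub y hij)
    _ = (∑ k ∈ {i, j}, |v k|) * ‖y i - y j‖ := by rw [sum_pair hij, add_mul]
    _ ≤ epow 2 q * relError p ξ y * ‖y i - y j‖ := by
        gcongr
        simpa [card_pair hij, relError] using sum_abs_le_epow_card_mul_pnorm p q {i, j} v

lemma injective_root_of_weierstrassPsi_pos (hy : Function.Injective y)
    (hψ : 0 < weierstrassPsi (n - 1) p q (relError p ξ y)) : Function.Injective ξ := by
  intro i j hij
  by_contra hne
  have hE := relError_nonneg p ξ y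
  have hdist : 0 < ‖y i - y j‖ := norm_sub_pos_iff.mpr (hy.ne hne)
  have hlt : epow 2 q * relError p ξ y < 1 :=
    (le_mul_of_one_le_right (mul_nonneg (epow_nonneg zero_le_two q) hE)
      (one_le_weierstrassMajorant hE)).trans_lt (sub_pos.mp hψ)
  refine lt_irrefl ‖y i - y j‖ ?_
  calc ‖y i - y j‖ = ‖(y i - ξ i) - (y j - ξ j)‖ := by rw [hij, sub_sub_sub_cancel_right]
    _ ≤ ‖y i - ξ i‖ + ‖y j - ξ j‖ := norm_sub_le _ _
    _ ≤ epow 2 q * relError p ξ y * ‖y i - y j‖ := norm_sub_root_add_norm_sub_root_le p q ξ hy hne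
    _ < ‖y i - y j‖ := mul_lt_of_lt_one_left hdist hlt

variable (hf : f ≠ 0) (hroot : IsRootVector f ξ) (hy : Function.Injective y)
include hf hroot hy

lemma weierstrassPsi_mul_norm_sub_le {i j : Fin n} (hij : i ≠ j) :
    weierstrassPsi (n - 1) p q (relError p ξ y) * ‖y i - y j‖ ≤
      ‖weierstrassStep f y i - weierstrassStep f y j‖ := by
  have hp : 1 ≤ p := ENNReal.HolderConjugate.one_le p q
  set M := weierstrassMajorant (n - 1) p (relError p ξ y)
  have hM0 : 0 ≤ M := zero_le_one.trans (one_le_weierstrassMajorant (relError_nonneg p ξ y))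
  have hW : ‖Wcorr f y i - Wcorr f y j‖ ≤ epow 2 q * relError p ξ y * M * ‖y i - y j‖ :=
    calc ‖Wcorr f y i - Wcorr f y j‖ ≤ M * ‖y i - ξ i‖ + M * ‖y j - ξ j‖ :=
          norm_sub_le_of_le (norm_Wcorr_le hf hroot hp hy i) (norm_Wcorr_le hf hroot hp hy j)
      _ = M * (‖y i - ξ i‖ + ‖y j - ξ j‖) := (mul_add _ _ _).symm
      _ ≤ M * (epow 2 q * relError p ξ y * ‖y i - y j‖) := by
          gcongr
          exact norm_sub_root_add_norm_sub_root_le p q ξ hy hij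
      _ = epow 2 q * relError p ξ y * M * ‖y i - y j‖ := by ring
  calc weierstrassPsi (n - 1) p q (relError p ξ y) * ‖y i - y j‖
      = ‖y i - y j‖ - epow 2 q * relError p ξ y * M * ‖y i - y j‖ := by
        rw [weierstrassPsi, sub_mul, one_mul]
    _ ≤ ‖y i - y j‖ - ‖Wcorr f y i - Wcorr f y j‖ := sub_le_sub_left hW _
    _ ≤ ‖(y i - y j) - (Wcorr f y i - Wcorr f y j)‖ := norm_sub_norm_le _ _
    _ = ‖weierstrassStep f y i - weierstrassStep f y j‖ := by
        rw [weierstrassStep, weierstrassStep, sub_sub_sub_comm]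

variable (hψ : 0 < weierstrassPsi (n - 1) p q (relError p ξ y))
include hψ

lemma injective_weierstrassStep : Function.Injective (weierstrassStep f y) := by
  intro i j hij
  by_contra hne
  have hdist : 0 < ‖y i - y j‖ := norm_sub_pos_iff.mpr (hy.ne hne)
  have hstep := weierstrassPsi_mul_norm_sub_le p q hf hroot hy hne
  rw [hij, sub_self, norm_zero] at hstep
  exact hstep.not_gt (mul_pos hψ hdist)

lemma weierstrassPsi_mul_dsep_le_dsep_weierstrassStep (i : Fin n) :
    weierstrassPsi (n - 1) p q (relError p ξ y) * dsep y i ≤ dsep (weierstrassStep f y) i := by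
  obtain ⟨j, hj, hdsep⟩ := exists_dsep_eq_norm_sub (weierstrassStep f y) i
  rw [hdsep]
  exact (mul_le_mul_of_nonneg_left (dsep_le_norm_sub y hj) hψ.le).trans
    (weierstrassPsi_mul_norm_sub_le p q hf hroot hy hj.symm)

lemma relError_weierstrassStep_le :
    relError p ξ (weierstrassStep f y) ≤
      weierstrassBeta (n - 1) p (relError p ξ y) / weierstrassPsi (n - 1) p q (relError p ξ y) *
        relError p ξ y := by
  have hp : 1 ≤ p := ENNReal.HolderConjugate.one_le p q
  set b := weierstrassBeta (n - 1) p (relError p ξ y)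
  set d := weierstrassPsi (n - 1) p q (relError p ξ y)
  have hb : 0 ≤ b := weierstrassBeta_nonneg (relError_nonneg p ξ y)
  have hcomp : ∀ i, ‖weierstrassStep f y i - ξ i‖ / dsep (weierstrassStep f y) i ≤
      b / d * (‖y i - ξ i‖ / dsep y i) := fun i =>
    calc ‖weierstrassStep f y i - ξ i‖ / dsep (weierstrassStep f y) i
        ≤ b * ‖y i - ξ i‖ / (d * dsep y i) :=
          div_le_div₀ (by positivity) (norm_weierstrassStep_sub_root_le hf hroot hp hy i)
            (mul_pos hψ (dsep_pos hy i))
            (weierstrassPsi_mul_dsep_le_dsep_weierstrassStep p q hf hroot hy hψ i)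
      _ = b / d * (‖y i - ξ i‖ / dsep y i) := mul_div_mul_comm _ _ _ _
  have hdsep := dsep_pos (injective_weierstrassStep p q hf hroot hy hψ)
  calc relError p ξ (weierstrassStep f y)
      ≤ pnorm p fun i => b / d * (‖y i - ξ i‖ / dsep y i) := pnorm_le_pnorm fun i =>
        abs_le_abs_of_nonneg (div_nonneg (norm_nonneg _) (hdsep i).le) (hcomp i)
    _ = b / d * relError p ξ y := by
        rw [pnorm_const_mul (one_pos.trans_le hp).ne', abs_of_nonneg (div_nonneg hb hψ.le),
          relError]

end Step

section Iteration

variable {K : Type*} [NormedField K] {n : ℕ} [Nontrivial (Fin n)] {f : Polynomial K}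
  {ξ : Fin n → K} (p q : ℝ≥0∞)

lemma weierstrassPsi_relError_pos {y : Fin n → K}
    (h : weierstrassBeta (n - 1) p (relError p ξ y) ≤ weierstrassPsi (n - 1) p q (relError p ξ y)) :
    0 < weierstrassPsi (n - 1) p q (relError p ξ y) :=
  weierstrassPsi_pos (Nat.sub_ne_zero_of_lt (Fin.nontrivial_iff_two_le.mp ‹_›))
    (relError_nonneg p ξ y) h

variable [p.HolderConjugate q] {x : ℕ → Fin n → K} (hf : f ≠ 0) (hroot : IsRootVector f ξ)
  (hx : ∀ k, x (k + 1) = weierstrassStep f (x k)) (hx0 : Function.Injective (x 0))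
  (h0 : weierstrassBeta (n - 1) p (relError p ξ (x 0)) ≤
    weierstrassPsi (n - 1) p q (relError p ξ (x 0)))
include hf hroot hx hx0 h0

lemma injective_and_relError_le (k : ℕ) :
    Function.Injective (x k) ∧ relError p ξ (x k) ≤ relError p ξ (x 0) := by
  induction k with
  | zero => exact ⟨hx0, le_rfl⟩
  | succ k ih =>
    obtain ⟨hinj, hle⟩ := ih
    have hk := weierstrassBeta_le_weierstrassPsi_mono (relError_nonneg p ξ (x k)) hle h0
    have hψ := weierstrassPsi_relError_pos p q hk
    rw [hx]
    refine ⟨injective_weierstrassStep p q hf hroot hinj hψ, ?_⟩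
    calc relError p ξ (weierstrassStep f (x k)) ≤ _ * relError p ξ (x k) :=
          relError_weierstrassStep_le p q hf hroot hinj hψ
      _ ≤ relError p ξ (x k) :=
          mul_le_of_le_one_left (relError_nonneg p ξ (x k)) (div_le_one_of_le₀ hk hψ.le)
      _ ≤ relError p ξ (x 0) := hle

lemma relError_le_pow_mul (k : ℕ) :
    relError p ξ (x k) ≤ (weierstrassBeta (n - 1) p (relError p ξ (x 0)) /
      weierstrassPsi (n - 1) p q (relError p ξ (x 0))) ^ (2 ^ k - 1) * relError p ξ (x 0) := by
  have hE := fun k => relError_nonneg p ξ (x k)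
  have hβ0 := weierstrassBeta_nonneg (m := n - 1) (p := p) (hE 0)
  have hψ0 := weierstrassPsi_relError_pos p q h0
  refine le_pow_two_pow_sub_one_mul (e := fun k => relError p ξ (x k))
    (div_nonneg hβ0 hψ0.le) (div_le_one_of_le₀ h0 hψ0.le) (fun k c hc0 hc1 hc => ?_) k
  obtain ⟨hinj, hle⟩ := injective_and_relError_le p q hf hroot hx hx0 h0 k
  have hψ := weierstrassPsi_anti (m := n - 1) (p := p) (q := q) (hE k) hle
  rw [hx, ← mul_div_assoc]
  refine (relError_weierstrassStep_le p q hf hroot hinj (hψ0.trans_le hψ)).trans ?_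
  gcongr
  · exact hE k
  · exact weierstrassBeta_le_mul hc0 hc1 (hE k) (hE 0) hc

lemma norm_iterate_succ_sub_root_le_pow (k : ℕ) (i : Fin n) :
    ‖x (k + 1) i - ξ i‖ ≤ weierstrassPsi (n - 1) p q (relError p ξ (x 0)) *
      (weierstrassBeta (n - 1) p (relError p ξ (x 0)) /
        weierstrassPsi (n - 1) p q (relError p ξ (x 0))) ^ 2 ^ k * ‖x k i - ξ i‖ := by
  have hE := fun k => relError_nonneg p ξ (x k)
  set b := weierstrassBeta (n - 1) p (relError p ξ (x 0))
  set d := weierstrassPsi (n - 1) p q (relError p ξ (x 0))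
  have hb : 0 ≤ b := weierstrassBeta_nonneg (hE 0)
  have hd : 0 < d := weierstrassPsi_relError_pos p q h0
  have hβ : weierstrassBeta (n - 1) p (relError p ξ (x k)) ≤ (b / d) ^ (2 ^ k - 1) * b :=
    weierstrassBeta_le_mul (by positivity) (pow_le_one₀ (by positivity)
      (div_le_one_of_le₀ h0 hd.le)) (hE k) (hE 0) (relError_le_pow_mul p q hf hroot hx hx0 h0 k)
  have hpow : (b / d) ^ (2 ^ k - 1) * b = d * (b / d) ^ 2 ^ k :=
    calc (b / d) ^ (2 ^ k - 1) * b = d * ((b / d) ^ (2 ^ k - 1) * (b / d)) := by field_simp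
      _ = d * (b / d) ^ 2 ^ k := by rw [← pow_succ, Nat.sub_add_cancel Nat.one_le_two_pow]
  rw [hx, ← hpow]
  refine (norm_weierstrassStep_sub_root_le hf hroot (ENNReal.HolderConjugate.one_le p q)
    (injective_and_relError_le p q hf hroot hx hx0 h0 k).1 i).trans ?_
  gcongr

lemma tendsto_iterate_root (i : Fin n) : Tendsto (fun k => x k i) atTop (𝓝 (ξ i)) := by
  have hE := fun k => relError_nonneg p ξ (x k)
  set b := weierstrassBeta (n - 1) p (relError p ξ (x 0))
  have hb : 0 ≤ b := weierstrassBeta_nonneg (hE 0)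
  have hstep : ∀ k, ‖x (k + 1) i - ξ i‖ ≤ b * ‖x k i - ξ i‖ := by
    intro k
    obtain ⟨hinj, hle⟩ := injective_and_relError_le p q hf hroot hx hx0 h0 k
    rw [hx]
    refine (norm_weierstrassStep_sub_root_le hf hroot (ENNReal.HolderConjugate.one_le p q)
      hinj i).trans ?_
    gcongr
    exact sub_le_sub_right (weierstrassMajorant_mono (hE k) hle) 1
  rw [tendsto_iff_norm_sub_tendsto_zero]
  refine squeeze_zero (fun k => norm_nonneg _)
    (fun k => le_geom (u := fun k => ‖x k i - ξ i‖) hb k fun k _ => hstep k) ?_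
  simpa using (tendsto_pow_atTop_nhds_zero_of_lt_one hb
    (weierstrassBeta_lt_one (hE 0) h0)).mul_const ‖x 0 i - ξ i‖

end Iteration

/-- second-kind local convergence theorem. If `x⁰` has pairwise distinct
components and `h(E(x⁰)) ≤ 2` where `E(x) = ‖(x−ξ)/d(x)‖_p` and
`h(t) = (1 + 2^{1/q}t)(1 + t/(n−1)^{1/p})^{n−1}`, then `f` has only simple zeros and
the Weierstrass iteration converges to `ξ` with estimates governed by
`λ = β(E(x⁰))/ψ(E(x⁰))` and `θ = ψ(E(x⁰))`. -/
theorem weierstrass_local_convergence_second_kind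
    {K : Type*} [NormedField K] {n : ℕ} (hn : 2 ≤ n)
    (f : Polynomial K) (hdeg : f.natDegree = n)
    (ξ : Fin n → K) (hroot : IsRootVector f ξ)
    (p q : ℝ≥0∞) (hp : 1 ≤ p) (hpq : 1 / p + 1 / q = 1)
    (E : (Fin n → K) → ℝ)
    (hE : ∀ y : Fin n → K, E y = pnorm p (fun i => ‖y i - ξ i‖ / dsep y i))
    (ψ β : ℝ → ℝ)
    (hψ : ∀ t : ℝ, ψ t = 1 - epow 2 q * t * (1 + t / epow ((n : ℝ) - 1) p) ^ (n - 1))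
    (hβ : ∀ t : ℝ, β t = (1 + t / epow ((n : ℝ) - 1) p) ^ (n - 1) - 1)
    (x : ℕ → Fin n → K) (hx0 : Function.Injective (x 0))
    (hinit : (1 + epow 2 q * E (x 0)) * (1 + E (x 0) / epow ((n : ℝ) - 1) p) ^ (n - 1) ≤ 2)
    (hiter : ∀ k : ℕ, x (k+1) = fun i => x k i - Wcorr f (x k) i) :
    Function.Injective ξ ∧
    (∀ k : ℕ, Function.Injective (x k)) ∧
    (∀ i : Fin n, Filter.Tendsto (fun k => x k i) Filter.atTop (nhds (ξ i))) ∧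
    (∀ k : ℕ, ∀ i : Fin n,
      ‖x (k+1) i - ξ i‖ ≤ ψ (E (x 0)) * (β (E (x 0)) / ψ (E (x 0))) ^ 2 ^ k * ‖x k i - ξ i‖) ∧
    (∀ k : ℕ, ∀ i : Fin n,
      ‖x k i - ξ i‖ ≤ ψ (E (x 0)) ^ k * (β (E (x 0)) / ψ (E (x 0))) ^ (2 ^ k - 1) *
        ‖x 0 i - ξ i‖) := by
  have hf : f ≠ 0 := by
    rintro rfl
    rw [Polynomial.natDegree_zero] at hdeg
    lia
  have : Nontrivial (Fin n) := Fin.nontrivial_iff_two_le.mpr hn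
  have : p.HolderConjugate q := ENNReal.holderConjugate_iff.mpr (by simpa only [one_div] using hpq)
  have hcast : (n : ℝ) - 1 = (n - 1 : ℕ) := by rw [Nat.cast_pred (by lia)]
  rw [hcast] at hinit
  simp only [hcast] at hψ hβ
  obtain rfl : E = relError p ξ := funext hE
  obtain rfl : ψ = weierstrassPsi (n - 1) p q := funext hψ
  obtain rfl : β = weierstrassBeta (n - 1) p := funext hβ
  have h0 := weierstrassBeta_le_weierstrassPsi_iff.mpr hinit
  have hψ0 := weierstrassPsi_relError_pos p q h0
  have hβ0 := weierstrassBeta_nonneg (m := n - 1) (p := p) (relError_nonneg p ξ (x 0))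
  have hstep := norm_iterate_succ_sub_root_le_pow p q hf hroot hiter hx0 h0
  exact ⟨injective_root_of_weierstrassPsi_pos p q hx0 hψ0,
    fun k => (injective_and_relError_le p q hf hroot hiter hx0 h0 k).1,
    tendsto_iterate_root p q hf hroot hiter hx0 h0, hstep,
    fun k i => le_pow_mul_pow_two_pow_sub_one_mul (a := fun k => ‖x k i - ξ i‖) hψ0.le
      (div_nonneg hβ0 hψ0.le) (fun k => hstep k i) k⟩
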